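/- arXiv:2505.10955 — 3 statements merged into one kernel-verified Lean document; each statement's English description precedes it below -/
import Mathlib

section
/- There exists a constant C > 0 such that for every twice continuously differentiable f : ℝ → ℝ with f and f'' square-integrable on ℝ the following two inequalities hold: (i) Σ_{k∈ℤ} f(k)² ≤ C (∫_ℝ f(t)² dt + ∫_ℝ f''(t)² dt); (ii) for every j ∈ ℕ₀, 2^{3j} Σ_{k∈ℤ} |(1/2) Δ²_{2^{−j−1}} f(2^{−j}k)|² ≤ C (∫_ℝ f(t)² dt + ∫_ℝ f''(t)² dt). In other words, the univariate dyadic norm sup_{j∈{−1,0,1,2,…}} 2^{3|j|/2} (Σ_{k∈ℤ} |d_{j,k}(f)|²)^{1/2} is bounded by a constant times (‖f‖²_{L²(ℝ)} + ‖f''‖²_{L²(ℝ)})^{1/2}. -/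
open scoped BigOperators ENNReal

/-- Second order difference operator: `Δ²_h f(t) = f(t+2h) − 2f(t+h) + f(t)`. -/
noncomputable def delta2 (f : ℝ → ℝ) (h t : ℝ) : ℝ := f (t + 2*h) - 2 * f (t + h) + f t

/-- The Faber hat function `v_{j,k}` for level `j ≥ 0`. -/
noncomputable def hatFn (j k : ℤ) (x : ℝ) : ℝ :=
  if (2:ℝ)^(-j) * (k:ℝ) ≤ x ∧ x ≤ (2:ℝ)^(-j) * ((k:ℝ) + 1/2) then
    (2:ℝ)^(j+1) * (x - (2:ℝ)^(-j) * (k:ℝ))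
  else if (2:ℝ)^(-j) * ((k:ℝ) + 1/2) ≤ x ∧ x ≤ (2:ℝ)^(-j) * ((k:ℝ) + 1) then
    (2:ℝ)^(j+1) * ((2:ℝ)^(-j) * ((k:ℝ) + 1) - x)
  else 0

/-- The Faber hat function `v_{j,k}`, including the level `j = −1`
(`v_{−1,k}(x) = max(1 − |x − k|, 0)`). -/
noncomputable def faberV (j k : ℤ) (x : ℝ) : ℝ :=
  if j = -1 then max (1 - |x - (k:ℝ)|) 0 else hatFn j k x

/-!
Integrating by parts twice against a weight `w` gives Green's identity
`∫ w f'' - ∫ w'' f = [w f' - w' f]`. With an affine weight vanishing at one endpoint it is Taylor's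
formula with integral remainder, and `Δ²_h f(t)` is the sum of the two first-order remainders based
at the midpoint `t + h`; with a cubic weight vanishing to second order at one endpoint it expresses
a point value of `f` through integrals of `f` and `f''` over a neighbouring cell. Cauchy–Schwarz
turns both into `L²` bounds on a cell, and the cells tile the line. The powers `2^{3j}` are
compensated by the factor `h³`, `h = 2^{-j-1}`, in the bound for the second difference.
-/

open MeasureTheory Set
open scoped Interval fwdDiff

section CauchySchwarz

lemma enorm_add_sq_le {F : Type*} [SeminormedAddCommGroup F] (x y : F) :
    ‖x + y‖ₑ ^ 2 ≤ 2 * (‖x‖ₑ ^ 2 + ‖y‖ₑ ^ 2) := by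
  have nnnorm_le : ‖x + y‖₊ ^ 2 ≤ 2 * (‖x‖₊ ^ 2 + ‖y‖₊ ^ 2) :=
    (pow_le_pow_left' (nnnorm_add_le x y) 2).trans add_sq_le
  simp only [enorm_eq_nnnorm]
  exact_mod_cast nnnorm_le

variable {E : Type*} [NormedAddCommGroup E] [NormedSpace ℝ E]

lemma enorm_integral_smul_sq_le {α : Type*} [MeasurableSpace α] {μ : Measure α}
    {w : α → ℝ} {g : α → E} (hw : AEStronglyMeasurable w μ) (hg : AEStronglyMeasurable g μ) :
    ‖∫ x, w x • g x ∂μ‖ₑ ^ 2 ≤ (∫⁻ x, ‖w x‖ₑ ^ 2 ∂μ) * ∫⁻ x, ‖g x‖ₑ ^ 2 ∂μ := by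
  have holder : ‖∫ x, w x • g x ∂μ‖ₑ
      ≤ (∫⁻ x, ‖w x‖ₑ ^ 2 ∂μ) ^ (1 / 2 : ℝ) * (∫⁻ x, ‖g x‖ₑ ^ 2 ∂μ) ^ (1 / 2 : ℝ) := by
    refine (enorm_integral_le_lintegral_enorm _).trans ?_
    simpa [enorm_smul] using
      ENNReal.lintegral_mul_le_Lp_mul_Lq μ Real.HolderConjugate.two_two hw.enorm hg.enorm
  have sq_sqrt (A : ℝ≥0∞) : (A ^ (1 / 2 : ℝ)) ^ 2 = A := by
    rw [← ENNReal.rpow_natCast, ← ENNReal.rpow_mul]; norm_num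
  calc ‖∫ x, w x • g x ∂μ‖ₑ ^ 2
      ≤ ((∫⁻ x, ‖w x‖ₑ ^ 2 ∂μ) ^ (1 / 2 : ℝ) * (∫⁻ x, ‖g x‖ₑ ^ 2 ∂μ) ^ (1 / 2 : ℝ)) ^ 2 := by
        gcongr
    _ = (∫⁻ x, ‖w x‖ₑ ^ 2 ∂μ) * ∫⁻ x, ‖g x‖ₑ ^ 2 ∂μ := by rw [mul_pow, sq_sqrt, sq_sqrt]

lemma enorm_intervalIntegral_smul_sq_le {w : ℝ → ℝ} {g : ℝ → E} {a b M : ℝ}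
    (hw : AEStronglyMeasurable w (volume.restrict (Ι a b)))
    (hg : AEStronglyMeasurable g (volume.restrict (Ι a b))) (hM : ∀ t ∈ Ι a b, |w t| ≤ M) :
    ‖∫ t in a..b, w t • g t‖ₑ ^ 2
      ≤ ENNReal.ofReal M ^ 2 * ENNReal.ofReal |b - a| * ∫⁻ t in Ι a b, ‖g t‖ₑ ^ 2 := by
  have weight : ∫⁻ t in Ι a b, ‖w t‖ₑ ^ 2 ≤ ENNReal.ofReal M ^ 2 * ENNReal.ofReal |b - a| := by
    rw [← Real.volume_uIoc, ← setLIntegral_const]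
    refine setLIntegral_mono measurable_const fun t ht => ?_
    rw [← ofReal_norm]
    gcongr
    exact hM t ht
  calc ‖∫ t in a..b, w t • g t‖ₑ ^ 2 = ‖∫ t in Ι a b, w t • g t‖ₑ ^ 2 := by
        rw [← ofReal_norm, intervalIntegral.norm_intervalIntegral_eq, ofReal_norm]
    _ ≤ (∫⁻ t in Ι a b, ‖w t‖ₑ ^ 2) * ∫⁻ t in Ι a b, ‖g t‖ₑ ^ 2 :=
        enorm_integral_smul_sq_le hw hg
    _ ≤ _ := by gcongr

end CauchySchwarz

section PointwiseBounds

variable {E : Type*} [NormedAddCommGroup E] [NormedSpace ℝ E] [CompleteSpace E]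
  {f f' f'' : ℝ → E} {a b h : ℝ}

lemma intervalIntegral_smul_sub_deriv2_smul {w w' w'' : ℝ → ℝ}
    (hw : ∀ t ∈ [[a, b]], HasDerivAt w (w' t) t) (hw' : ∀ t ∈ [[a, b]], HasDerivAt w' (w'' t) t)
    (hw'' : IntervalIntegrable w'' volume a b)
    (hf : ∀ t ∈ [[a, b]], HasDerivAt f (f' t) t) (hf' : ∀ t ∈ [[a, b]], HasDerivAt f' (f'' t) t)
    (hf'' : IntervalIntegrable f'' volume a b) :
    (∫ t in a..b, w t • f'' t) - ∫ t in a..b, w'' t • f t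
      = (w b • f' b - w' b • f b) - (w a • f' a - w' a • f a) := by
  have int_w' : IntervalIntegrable w' volume a b :=
    ContinuousOn.intervalIntegrable fun t ht => (hw' t ht).continuousAt.continuousWithinAt
  have int_f' : IntervalIntegrable f' volume a b :=
    ContinuousOn.intervalIntegrable fun t ht => (hf' t ht).continuousAt.continuousWithinAt
  rw [intervalIntegral.integral_smul_deriv_eq_deriv_smul hw hf' int_w' hf'',
    intervalIntegral.integral_smul_deriv_eq_deriv_smul hw' hf hw'' int_f']
  abel

lemma enorm_sub_sub_smul_deriv_sq_le
    (hf : ∀ t ∈ [[a, b]], HasDerivAt f (f' t) t) (hf' : ∀ t ∈ [[a, b]], HasDerivAt f' (f'' t) t)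
    (hf'' : IntervalIntegrable f'' volume a b) :
    ‖f b - f a - (b - a) • f' a‖ₑ ^ 2
      ≤ ENNReal.ofReal |b - a| ^ 3 * ∫⁻ t in Ι a b, ‖f'' t‖ₑ ^ 2 := by
  have remainder : f b - f a - (b - a) • f' a = ∫ t in a..b, (b - t) • f'' t := by
    have green := intervalIntegral_smul_sub_deriv2_smul (w := fun t => b - t) (w' := fun _ => -1)
      (w'' := fun _ => 0) (fun t _ => (hasDerivAt_id t).const_sub b)
      (fun t _ => hasDerivAt_const t _) intervalIntegrable_const hf hf' hf''
    simp only [zero_smul, intervalIntegral.integral_zero, sub_zero, sub_self, neg_smul,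
      one_smul] at green
    rw [green]
    abel
  have weight_le : ∀ t ∈ Ι a b, |b - t| ≤ |b - a| := fun t ht =>
    abs_sub_right_of_mem_uIcc (uIoc_subset_uIcc ht)
  rw [remainder]
  refine (enorm_intervalIntegral_smul_sq_le (by fun_prop) hf''.def'.aestronglyMeasurable
    weight_le).trans_eq ?_
  ring

lemma fwdDiff_iterate_two {M G : Type*} [NonAssocSemiring M] [AddCommGroup G] (g : M → G)
    (x y : M) :
    (Δ_[y])^[2] g x = g (x + 2 * y) - 2 • g (x + y) + g x := by
  simp only [Function.iterate_succ, Function.iterate_zero, Function.comp_apply, id_eq, fwdDiff,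
    add_assoc, two_mul, two_nsmul]
  abel

lemma enorm_fwdDiff_iterate_two_sq_le (hh : 0 ≤ h)
    (hf : ∀ t ∈ Icc a (a + 2 * h), HasDerivAt f (f' t) t)
    (hf' : ∀ t ∈ Icc a (a + 2 * h), HasDerivAt f' (f'' t) t)
    (hf'' : IntervalIntegrable f'' volume a (a + 2 * h)) :
    ‖(Δ_[h])^[2] f a‖ₑ ^ 2
      ≤ 2 * ENNReal.ofReal h ^ 3 * ∫⁻ t in Ioc a (a + 2 * h), ‖f'' t‖ₑ ^ 2 := by
  have taylor (x : ℝ) (hx : x ∈ Icc a (a + 2 * h)) :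
      ‖f x - f (a + h) - (x - (a + h)) • f' (a + h)‖ₑ ^ 2
        ≤ ENNReal.ofReal |x - (a + h)| ^ 3 * ∫⁻ t in Ι (a + h) x, ‖f'' t‖ₑ ^ 2 := by
    have hm : a + h ∈ Icc a (a + 2 * h) := ⟨by linarith, by linarith⟩
    have hsub : [[a + h, x]] ⊆ Icc a (a + 2 * h) := uIcc_subset_Icc hm hx
    exact enorm_sub_sub_smul_deriv_sq_le (fun t ht => hf t (hsub ht)) (fun t ht => hf' t (hsub ht))
      (hf''.mono_set (hsub.trans Icc_subset_uIcc))
  have right := taylor (a + 2 * h) ⟨by linarith, le_rfl⟩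
  have left := taylor a ⟨le_rfl, by linarith⟩
  rw [show a + 2 * h - (a + h) = h by ring, abs_of_nonneg hh, uIoc_of_le (by linarith)] at right
  rw [show a - (a + h) = -h by ring, abs_neg, abs_of_nonneg hh, uIoc_of_ge (by linarith)] at left
  have split : ∫⁻ t in Ioc a (a + 2 * h), ‖f'' t‖ₑ ^ 2
      = (∫⁻ t in Ioc (a + h) (a + 2 * h), ‖f'' t‖ₑ ^ 2) + ∫⁻ t in Ioc a (a + h), ‖f'' t‖ₑ ^ 2 := by
    rw [← Ioc_union_Ioc_eq_Ioc (b := a + h) (by linarith) (by linarith),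
      lintegral_union measurableSet_Ioc (Ioc_disjoint_Ioc_of_le le_rfl), add_comm]
  have decomposition : (Δ_[h])^[2] f a = (f (a + 2 * h) - f (a + h) - h • f' (a + h))
      + (f a - f (a + h) - (-h) • f' (a + h)) := by
    rw [fwdDiff_iterate_two, neg_smul]
    abel
  rw [decomposition, split, mul_add, mul_assoc, mul_assoc, ← mul_add]
  refine (enorm_add_sq_le _ _).trans ?_
  gcongr

-- The weight `w t = (t - a) * (a + h - t) ^ 2` satisfies `w a = w (a + h) = w' (a + h) = 0` and
-- `w' a = h ^ 2`, so the sample at `a` is the only boundary term that survives.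
lemma sq_smul_eq_intervalIntegral_sub
    (hf : ∀ t ∈ [[a, a + h]], HasDerivAt f (f' t) t)
    (hf' : ∀ t ∈ [[a, a + h]], HasDerivAt f' (f'' t) t)
    (hf'' : IntervalIntegrable f'' volume a (a + h)) :
    h ^ 2 • f a = (∫ t in a..a + h, ((t - a) * (a + h - t) ^ 2) • f'' t)
      - ∫ t in a..a + h, (6 * (t - a) - 4 * h) • f t := by
  have deriv_left (t : ℝ) : HasDerivAt (fun s => s - a) 1 t := (hasDerivAt_id t).sub_const a
  have deriv_right (t : ℝ) : HasDerivAt (fun s => (a + h - s) ^ 2) (-2 * (a + h - t)) t := by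
    simpa using ((hasDerivAt_id t).const_sub (a + h)).fun_pow 2
  have deriv_w (t : ℝ) : HasDerivAt (fun s => (s - a) * (a + h - s) ^ 2)
      ((a + h - t) ^ 2 + (t - a) * (-2 * (a + h - t))) t := by
    simpa using (deriv_left t).fun_mul (deriv_right t)
  have deriv_w' (t : ℝ) :
      HasDerivAt (fun s => (a + h - s) ^ 2 + (s - a) * (-2 * (a + h - s)))
        (6 * (t - a) - 4 * h) t := by
    refine ((deriv_right t).add ((deriv_left t).mul
      (((hasDerivAt_id t).const_sub (a + h)).const_mul (-2)))).congr_deriv ?_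
    simp only [id]
    ring
  rw [intervalIntegral_smul_sub_deriv2_smul (fun t _ => deriv_w t) (fun t _ => deriv_w' t)
    (Continuous.intervalIntegrable (by fun_prop) _ _) hf hf' hf'']
  simp

lemma abs_sub_mul_sq_sub_le {t : ℝ} (ht : t ∈ Icc a (a + h)) :
    |(t - a) * (a + h - t) ^ 2| ≤ h ^ 3 := by
  obtain ⟨hat, hth⟩ := ht
  have left_nonneg : 0 ≤ t - a := by linarith
  have right_nonneg : 0 ≤ a + h - t := by linarith
  rw [abs_of_nonneg (mul_nonneg left_nonneg (sq_nonneg _)), pow_succ' h 2]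
  exact mul_le_mul (by linarith) (pow_le_pow_left₀ right_nonneg (by linarith) 2)
    (by positivity) (by linarith)

lemma abs_six_mul_sub_sub_le {t : ℝ} (ht : t ∈ Icc a (a + h)) :
    |6 * (t - a) - 4 * h| ≤ 4 * h := by
  obtain ⟨hat, hth⟩ := ht
  exact abs_le.2 ⟨by linarith, by linarith⟩

lemma ofReal_mul_enorm_sq_le_lintegral_Ioc (hh : 0 < h)
    (hf : ∀ t ∈ Icc a (a + h), HasDerivAt f (f' t) t)
    (hf' : ∀ t ∈ Icc a (a + h), HasDerivAt f' (f'' t) t)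
    (hf'' : IntervalIntegrable f'' volume a (a + h)) :
    ENNReal.ofReal h * ‖f a‖ₑ ^ 2 ≤ 32 * (∫⁻ t in Ioc a (a + h), ‖f t‖ₑ ^ 2)
      + 2 * ENNReal.ofReal h ^ 4 * ∫⁻ t in Ioc a (a + h), ‖f'' t‖ₑ ^ 2 := by
  have hah : a ≤ a + h := by linarith
  have int_f : IntervalIntegrable f volume a (a + h) :=
    ContinuousOn.intervalIntegrable_of_Icc hah fun t ht =>
      (hf t ht).continuousAt.continuousWithinAt
  rw [← uIcc_of_le hah] at hf hf'
  have cell {t : ℝ} (ht : t ∈ Ι a (a + h)) : t ∈ Icc a (a + h) :=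
    Ioc_subset_Icc_self (uIoc_of_le hah ▸ ht)
  have bound_f'' := enorm_intervalIntegral_smul_sq_le (by fun_prop) hf''.def'.aestronglyMeasurable
    fun t ht => abs_sub_mul_sq_sub_le (cell ht)
  have bound_f := enorm_intervalIntegral_smul_sq_le (by fun_prop) int_f.def'.aestronglyMeasurable
    fun t ht => abs_six_mul_sub_sub_le (cell ht)
  rw [uIoc_of_le hah, add_sub_cancel_left, abs_of_pos hh] at bound_f bound_f''
  rw [ENNReal.ofReal_mul (by norm_num)] at bound_f
  rw [ENNReal.ofReal_pow hh.le] at bound_f''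
  set δ := ENNReal.ofReal h
  set A := ∫⁻ t in Ioc a (a + h), ‖f t‖ₑ ^ 2
  set B := ∫⁻ t in Ioc a (a + h), ‖f'' t‖ₑ ^ 2
  have scaled : δ ^ 3 * (δ * ‖f a‖ₑ ^ 2) ≤ δ ^ 3 * (32 * A + 2 * δ ^ 4 * B) := by
    calc δ ^ 3 * (δ * ‖f a‖ₑ ^ 2) = ‖h ^ 2 • f a‖ₑ ^ 2 := by
          rw [enorm_smul, enorm_pow, Real.enorm_of_nonneg hh.le]; ring
      _ ≤ 2 * ((δ ^ 3) ^ 2 * δ * B + (ENNReal.ofReal 4 * δ) ^ 2 * δ * A) := by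
          rw [sq_smul_eq_intervalIntegral_sub hf hf' hf'', sub_eq_add_neg]
          refine (enorm_add_sq_le _ _).trans ?_
          rw [enorm_neg]
          gcongr
      _ = δ ^ 3 * (32 * A + 2 * δ ^ 4 * B) := by
          rw [ENNReal.ofReal_ofNat]; ring
  have δ_ne_zero : δ ≠ 0 := (ENNReal.ofReal_pos.2 hh).ne'
  exact (ENNReal.mul_le_mul_iff_right (pow_ne_zero 3 δ_ne_zero)
    (ENNReal.pow_ne_top ENNReal.ofReal_ne_top)).1 scaled

end PointwiseBounds

section LatticeSums

lemma tsum_lintegral_Ioc_mul_intCast {c : ℝ} (hc : 0 < c) (F : ℝ → ℝ≥0∞) :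
    ∑' k : ℤ, ∫⁻ t in Ioc (c * k) (c * k + c), F t = ∫⁻ t, F t := by
  have cell (k : ℤ) : Ioc (c * k) (c * k + c) = Ioc (k • c) ((k + 1) • c) := by
    simp only [zsmul_eq_mul, Int.cast_add, Int.cast_one, add_mul, one_mul, mul_comm c]
  simp_rw [cell]
  rw [← lintegral_iUnion (fun _ => measurableSet_Ioc) (pairwise_disjoint_Ioc_zsmul c),
    iUnion_Ioc_zsmul hc, setLIntegral_univ]

variable {E : Type*} [NormedAddCommGroup E] [NormedSpace ℝ E] [CompleteSpace E]
  {f f' f'' : ℝ → E} {h : ℝ}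

lemma intervalIntegrable_of_lintegral_enorm_sq_ne_top {F : Type*} [NormedAddCommGroup F]
    {g : ℝ → F} (hg : AEStronglyMeasurable g) (hg2 : ∫⁻ t, ‖g t‖ₑ ^ 2 ≠ ⊤) (a b : ℝ) :
    IntervalIntegrable g volume a b := by
  have memLp : MemLp g 2 := ⟨hg, by
    rw [eLpNorm_lt_top_iff_lintegral_rpow_enorm_lt_top two_ne_zero ENNReal.ofNat_ne_top]
    simpa using hg2.lt_top⟩
  exact ((memLp.locallyIntegrable one_le_two).integrableOn_isCompact
    isCompact_uIcc).intervalIntegrable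

lemma aestronglyMeasurable_of_hasDerivAt (hf : ∀ t, HasDerivAt f (f' t) t) :
    AEStronglyMeasurable f' := by
  rw [← deriv_eq hf]
  exact aestronglyMeasurable_deriv f volume

lemma ofReal_mul_tsum_enorm_sq_le_lintegral (hh : 0 < h)
    (hf : ∀ t, HasDerivAt f (f' t) t) (hf' : ∀ t, HasDerivAt f' (f'' t) t) :
    ENNReal.ofReal h * ∑' k : ℤ, ‖f (h * k)‖ₑ ^ 2
      ≤ 32 * (∫⁻ t, ‖f t‖ₑ ^ 2) + 2 * ENNReal.ofReal h ^ 4 * ∫⁻ t, ‖f'' t‖ₑ ^ 2 := by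
  by_cases hf'' : ∫⁻ t, ‖f'' t‖ₑ ^ 2 = ⊤
  · simp [hf'', ENNReal.mul_top, hh]
  have int_f'' := intervalIntegrable_of_lintegral_enorm_sq_ne_top
    (aestronglyMeasurable_of_hasDerivAt hf') hf''
  rw [← tsum_lintegral_Ioc_mul_intCast hh (fun t => ‖f t‖ₑ ^ 2),
    ← tsum_lintegral_Ioc_mul_intCast hh (fun t => ‖f'' t‖ₑ ^ 2), ← ENNReal.tsum_mul_left,
    ← ENNReal.tsum_mul_left, ← ENNReal.tsum_mul_left, ← ENNReal.tsum_add]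
  exact ENNReal.tsum_le_tsum fun k => ofReal_mul_enorm_sq_le_lintegral_Ioc hh (fun t _ => hf t)
    (fun t _ => hf' t) (int_f'' _ _)

lemma tsum_enorm_fwdDiff_iterate_two_sq_le (hh : 0 < h)
    (hf : ∀ t, HasDerivAt f (f' t) t) (hf' : ∀ t, HasDerivAt f' (f'' t) t) :
    ∑' k : ℤ, ‖(Δ_[h])^[2] f (2 * h * k)‖ₑ ^ 2
      ≤ 2 * ENNReal.ofReal h ^ 3 * ∫⁻ t, ‖f'' t‖ₑ ^ 2 := by
  by_cases hf'' : ∫⁻ t, ‖f'' t‖ₑ ^ 2 = ⊤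
  · simp [hf'', ENNReal.mul_top, hh]
  have int_f'' := intervalIntegrable_of_lintegral_enorm_sq_ne_top
    (aestronglyMeasurable_of_hasDerivAt hf') hf''
  rw [← tsum_lintegral_Ioc_mul_intCast (mul_pos two_pos hh), ← ENNReal.tsum_mul_left]
  exact ENNReal.tsum_le_tsum fun k => enorm_fwdDiff_iterate_two_sq_le hh.le (fun t _ => hf t)
    (fun t _ => hf' t) (int_f'' _ _)

end LatticeSums

section FaberCoefficients

variable {E : Type*} [NormedAddCommGroup E] [NormedSpace ℝ E]

/-- The Faber coefficient `d_{j,k}(f) = −(1/2) Δ²_{2^{−j−1}} f(2^{−j}k)` at a level `j ≥ 0`; the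
coefficient at level `−1` is the sample `f k` itself and is not covered by this definition. -/
noncomputable def faberCoeff (f : ℝ → E) (j : ℕ) (k : ℤ) : E :=
  -(1 / 2 : ℝ) • (Δ_[(2 : ℝ) ^ (-(j : ℤ) - 1)])^[2] f ((2 : ℝ) ^ (-(j : ℤ)) * k)

lemma delta2_eq_fwdDiff_iterate (f : ℝ → ℝ) (h t : ℝ) : delta2 f h t = (Δ_[h])^[2] f t := by
  rw [delta2, fwdDiff_iterate_two, nsmul_eq_mul, Nat.cast_ofNat]

lemma faberCoeff_eq_delta2 (f : ℝ → ℝ) (j : ℕ) (k : ℤ) :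
    faberCoeff f j k
      = -(1 / 2 * delta2 f ((2 : ℝ) ^ (-(j : ℤ) - 1)) ((2 : ℝ) ^ (-(j : ℤ)) * k)) := by
  rw [faberCoeff, delta2_eq_fwdDiff_iterate, smul_eq_mul, neg_mul]

lemma two_pow_mul_tsum_enorm_faberCoeff_sq_le [CompleteSpace E] {f f' f'' : ℝ → E}
    (hf : ∀ t, HasDerivAt f (f' t) t) (hf' : ∀ t, HasDerivAt f' (f'' t) t) (j : ℕ) :
    2 ^ (3 * j) * ∑' k : ℤ, ‖faberCoeff f j k‖ₑ ^ 2 ≤ ∫⁻ t, ‖f'' t‖ₑ ^ 2 := by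
  set h : ℝ := (2 : ℝ) ^ (-(j : ℤ) - 1) with h_def
  have spacing : (2 : ℝ) ^ (-(j : ℤ)) = 2 * h := by
    rw [h_def, zpow_sub_one₀ two_ne_zero]
    ring
  have coeff_le (k : ℤ) : ‖faberCoeff f j k‖ₑ ^ 2 ≤ ‖(Δ_[h])^[2] f (2 * h * k)‖ₑ ^ 2 := by
    have half_le : ‖-(1 / 2 : ℝ)‖ₑ ≤ 1 := by
      rw [enorm_neg, Real.enorm_of_nonneg (by norm_num), ENNReal.ofReal_le_one]
      norm_num
    rw [faberCoeff, spacing, enorm_smul]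
    gcongr
    exact mul_le_of_le_one_left' half_le
  have constant_le : 2 ^ (3 * j) * (2 * ENNReal.ofReal h ^ 3) ≤ 1 := by
    have real_eq : 2 ^ (3 * j) * (2 * h ^ 3) = 1 / 4 := by
      have cancel : 2 ^ j * (2 * h) = 1 := by
        rw [← spacing, ← zpow_natCast, ← zpow_add₀ two_ne_zero, add_neg_cancel, zpow_zero]
      calc 2 ^ (3 * j) * (2 * h ^ 3) = (2 ^ j * (2 * h)) ^ 3 / 4 := by ring
        _ = 1 / 4 := by rw [cancel, one_pow]
    rw [← ENNReal.ofReal_ofNat 2, ← ENNReal.ofReal_pow (by norm_num),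
      ← ENNReal.ofReal_pow (by positivity), ← ENNReal.ofReal_mul (by norm_num),
      ← ENNReal.ofReal_mul (by positivity), real_eq, ENNReal.ofReal_le_one]
    norm_num
  calc 2 ^ (3 * j) * ∑' k : ℤ, ‖faberCoeff f j k‖ₑ ^ 2
      ≤ 2 ^ (3 * j) * (2 * ENNReal.ofReal h ^ 3 * ∫⁻ t, ‖f'' t‖ₑ ^ 2) := by
        gcongr
        exact (ENNReal.tsum_le_tsum coeff_le).trans
          (tsum_enorm_fwdDiff_iterate_two_sq_le (by positivity) hf hf')
    _ ≤ ∫⁻ t, ‖f'' t‖ₑ ^ 2 := by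
        rw [← mul_assoc]
        exact mul_le_of_le_one_left' constant_le

end FaberCoefficients

lemma ofReal_sq_eq_enorm_sq (x : ℝ) : ENNReal.ofReal (x ^ 2) = ‖x‖ₑ ^ 2 := by
  rw [← enorm_pow, Real.enorm_of_nonneg (sq_nonneg x)]

lemma ofReal_integral_sq {α : Type*} [MeasurableSpace α] {μ : Measure α} {g : α → ℝ}
    (hg : Integrable (fun x => g x ^ 2) μ) :
    ENNReal.ofReal (∫ x, g x ^ 2 ∂μ) = ∫⁻ x, ‖g x‖ₑ ^ 2 ∂μ := by
  rw [ofReal_integral_eq_lintegral_ofReal hg (ae_of_all _ fun x => sq_nonneg (g x))]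
  simp_rw [ofReal_sq_eq_enorm_sq]

theorem faber_coefficient_decay_real_line_general {E : Type*} [NormedAddCommGroup E]
    [NormedSpace ℝ E] [CompleteSpace E] {f : ℝ → E} (hf : Differentiable ℝ f)
    (hf' : Differentiable ℝ (deriv f)) :
    ∑' k : ℤ, ‖f k‖ₑ ^ 2
        ≤ 32 * ((∫⁻ t, ‖f t‖ₑ ^ 2) + ∫⁻ t, ‖iteratedDeriv 2 f t‖ₑ ^ 2) ∧
      ∀ j : ℕ, 2 ^ (3 * j) * ∑' k : ℤ, ‖faberCoeff f j k‖ₑ ^ 2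
        ≤ 32 * ((∫⁻ t, ‖f t‖ₑ ^ 2) + ∫⁻ t, ‖iteratedDeriv 2 f t‖ₑ ^ 2) := by
  have deriv_f (t : ℝ) : HasDerivAt f (deriv f t) t := (hf t).hasDerivAt
  have deriv_f' (t : ℝ) : HasDerivAt (deriv f) (iteratedDeriv 2 f t) t := by
    rw [iteratedDeriv_succ, iteratedDeriv_one]
    exact (hf' t).hasDerivAt
  refine ⟨?_, fun j => ?_⟩
  · calc ∑' k : ℤ, ‖f k‖ₑ ^ 2
        ≤ 32 * (∫⁻ t, ‖f t‖ₑ ^ 2) + 2 * ∫⁻ t, ‖iteratedDeriv 2 f t‖ₑ ^ 2 := by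
          simpa using ofReal_mul_tsum_enorm_sq_le_lintegral one_pos deriv_f deriv_f'
      _ ≤ 32 * ((∫⁻ t, ‖f t‖ₑ ^ 2) + ∫⁻ t, ‖iteratedDeriv 2 f t‖ₑ ^ 2) := by
          rw [mul_add]
          gcongr
          norm_num
  · calc 2 ^ (3 * j) * ∑' k : ℤ, ‖faberCoeff f j k‖ₑ ^ 2
        ≤ 1 * ∫⁻ t, ‖iteratedDeriv 2 f t‖ₑ ^ 2 := by
          rw [one_mul]
          exact two_pow_mul_tsum_enorm_faberCoeff_sq_le deriv_f deriv_f' j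
      _ ≤ 32 * ((∫⁻ t, ‖f t‖ₑ ^ 2) + ∫⁻ t, ‖iteratedDeriv 2 f t‖ₑ ^ 2) := by
          gcongr
          · norm_num
          · exact le_add_self

/-- univariate Faber coefficient decay, `H²(ℝ)`:
there is `C > 0` such that for all `f ∈ C²(ℝ)` with `f, f'' ∈ L²(ℝ)`:
(i) `Σ_{k∈ℤ} f(k)² ≤ C(‖f‖²_{L²} + ‖f''‖²_{L²})`, and
(ii) for every `j ∈ ℕ₀`, `2^{3j} Σ_{k∈ℤ} |(1/2)Δ²_{2^{−j−1}} f(2^{−j}k)|²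
≤ C(‖f‖²_{L²} + ‖f''‖²_{L²})` (sums taken in `[0,∞]`). -/
theorem faber_coefficient_decay_real_line :
    ∃ C : ℝ, 0 < C ∧ ∀ f : ℝ → ℝ, ContDiff ℝ 2 f →
      MeasureTheory.Integrable (fun t => f t ^ 2) →
      MeasureTheory.Integrable (fun t => (iteratedDeriv 2 f t)^2) →
      (∑' k : ℤ, ENNReal.ofReal (f (k:ℝ) ^ 2)
          ≤ ENNReal.ofReal (C * ((∫ t : ℝ, f t ^ 2) + ∫ t : ℝ, (iteratedDeriv 2 f t)^2))) ∧
      (∀ j : ℕ,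
        (2:ℝ≥0∞)^(3*j) *
            ∑' k : ℤ, ENNReal.ofReal
              (((1/2) * delta2 f ((2:ℝ)^(-(j:ℤ)-1)) ((2:ℝ)^(-(j:ℤ)) * (k:ℝ)))^2)
          ≤ ENNReal.ofReal (C * ((∫ t : ℝ, f t ^ 2) + ∫ t : ℝ, (iteratedDeriv 2 f t)^2))) := by
  refine ⟨32, by norm_num, fun f hf hf0 hf2 => ?_⟩
  rw [ENNReal.ofReal_mul (by norm_num), ENNReal.ofReal_add (by positivity) (by positivity),
    ofReal_integral_sq hf0, ofReal_integral_sq hf2]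
  simpa [ofReal_sq_eq_enorm_sq, faberCoeff_eq_delta2] using
    faber_coefficient_decay_real_line_general (hf.differentiable two_ne_zero)
      hf.differentiable_deriv_two
end

section
/- Let f : [0,1] → ℝ be continuous and define g : [0,1] → ℝ by g(x) = f(|2x − 1|). Then: (i) g(0) = f(1); (ii) −(1/2)(g(1) − 2g(1/2) + g(0)) = f(0) − f(1); and (iii) for every j ≥ 1 and every k with 0 ≤ k < 2^j, Δ²_{2^{−j−1}} g(2^{−j}k) = Δ²_{2^{−j}} f(2^{−j+1}(2^{j−1} − k − 1)) if 0 ≤ k < 2^{j−1}, and Δ²_{2^{−j−1}} g(2^{−j}k) = Δ²_{2^{−j}} f(2^{−j+1}(k − 2^{j−1})) if 2^{j−1} ≤ k < 2^j. -/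
/-!
The tent map is affine on each half of `[0,1]`, with slope `∓2`. A second difference transforms
under an affine substitution by rescaling its step and base point, and reversing the sign of the
step only exchanges its two outer nodes. Since `1/2` is a dyadic point, the three nodes of a
difference of `g` of step `2^{-j-1}` at `2^{-j}k` all lie in the same half.
-/

open scoped BigOperators ENNReal

/-- The tent map `x ↦ |2x − 1|`, so that `f ∘ tent` is the tent transform of `f`. -/
def tent (x : ℝ) : ℝ := |2 * x - 1|

lemma delta2_congr {f g : ℝ → ℝ} {h t : ℝ} (h₀ : f t = g t)
    (h₁ : f (t + h) = g (t + h)) (h₂ : f (t + 2 * h) = g (t + 2 * h)) :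
    delta2 f h t = delta2 g h t := by
  simp only [delta2, h₀, h₁, h₂]

lemma delta2_comp_affine (f : ℝ → ℝ) (a b h t : ℝ) :
    delta2 (fun x => f (a * x + b)) h t = delta2 f (a * h) (a * t + b) := by
  simp only [delta2]
  ring_nf

lemma delta2_neg_step (f : ℝ → ℝ) (h t : ℝ) : delta2 f (-h) t = delta2 f h (t - 2 * h) := by
  simp only [delta2]
  ring_nf

section Tent

variable {x h t : ℝ}

lemma tent_of_le_half (hx : x ≤ 1 / 2) : tent x = -2 * x + 1 := by
  rw [tent, abs_of_nonpos (by linarith)]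
  ring

lemma tent_of_half_le (hx : 1 / 2 ≤ x) : tent x = 2 * x + -1 := by
  rw [tent, abs_of_nonneg (by linarith)]
  ring

lemma delta2_comp_tent_of_le_half (f : ℝ → ℝ) (ht : t ≤ 1 / 2) (hth : t + 2 * h ≤ 1 / 2) :
    delta2 (f ∘ tent) h t = delta2 f (2 * h) (1 - 2 * (t + 2 * h)) := by
  have eq_affine {x : ℝ} (hx : x ≤ 1 / 2) : (f ∘ tent) x = f (-2 * x + 1) :=
    congrArg f (tent_of_le_half hx)
  calc delta2 (f ∘ tent) h t
      = delta2 (fun x => f (-2 * x + 1)) h t :=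
        delta2_congr (eq_affine ht) (eq_affine (by linarith)) (eq_affine hth)
    _ = delta2 f (-(2 * h)) (-2 * t + 1) := by rw [delta2_comp_affine, neg_mul 2 h]
    _ = delta2 f (2 * h) (1 - 2 * (t + 2 * h)) := by
        rw [delta2_neg_step]
        ring_nf

lemma delta2_comp_tent_of_half_le (f : ℝ → ℝ) (ht : 1 / 2 ≤ t) (hth : 1 / 2 ≤ t + 2 * h) :
    delta2 (f ∘ tent) h t = delta2 f (2 * h) (2 * t - 1) := by
  have eq_affine {x : ℝ} (hx : 1 / 2 ≤ x) : (f ∘ tent) x = f (2 * x + -1) :=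
    congrArg f (tent_of_half_le hx)
  calc delta2 (f ∘ tent) h t
      = delta2 (fun x => f (2 * x + -1)) h t :=
        delta2_congr (eq_affine ht) (eq_affine (by linarith)) (eq_affine hth)
    _ = delta2 f (2 * h) (2 * t - 1) := by rw [delta2_comp_affine, ← sub_eq_add_neg]

end Tent

section Dyadic

lemma two_mul_two_zpow_sub_one (n : ℤ) : 2 * (2 : ℝ) ^ (n - 1) = 2 ^ n := by
  rw [← zpow_one_add₀ two_ne_zero, add_sub_cancel]

lemma two_zpow_neg_mul_two_pow_pred {j : ℕ} (hj : 1 ≤ j) :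
    (2 : ℝ) ^ (-(j : ℤ)) * 2 ^ (j - 1) = 1 / 2 := by
  rw [← zpow_natCast, ← zpow_add₀ two_ne_zero, Nat.cast_sub hj, Nat.cast_one,
    neg_add_eq_sub, sub_sub_cancel_left, zpow_neg_one, one_div]

variable {j : ℕ} {k : ℤ}

lemma delta2_comp_tent_dyadic_of_lt (f : ℝ → ℝ) (hj : 1 ≤ j) (hk : k < 2 ^ (j - 1)) :
    delta2 (f ∘ tent) (2 ^ (-(j : ℤ) - 1)) (2 ^ (-(j : ℤ)) * k) =
      delta2 f (2 ^ (-(j : ℤ))) (2 ^ (-(j : ℤ) + 1) * (2 ^ (j - 1) - k - 1)) := by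
  have step := two_mul_two_zpow_sub_one (-j)
  have half := two_zpow_neg_mul_two_pow_pred hj
  have pos : (0 : ℝ) < 2 ^ (-(j : ℤ)) := by positivity
  have hk' : (k : ℝ) + 1 ≤ 2 ^ (j - 1) := mod_cast hk
  have right_node_le : (2 : ℝ) ^ (-(j : ℤ)) * (k + 1) ≤ 1 / 2 :=
    half ▸ mul_le_mul_of_nonneg_left hk' pos.le
  rw [delta2_comp_tent_of_le_half f (by linarith) (by linarith), step,
    zpow_add_one₀ two_ne_zero]
  congr 1
  linear_combination -2 * half

lemma delta2_comp_tent_dyadic_of_le (f : ℝ → ℝ) (hj : 1 ≤ j) (hk : 2 ^ (j - 1) ≤ k) :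
    delta2 (f ∘ tent) (2 ^ (-(j : ℤ) - 1)) (2 ^ (-(j : ℤ)) * k) =
      delta2 f (2 ^ (-(j : ℤ))) (2 ^ (-(j : ℤ) + 1) * (k - 2 ^ (j - 1))) := by
  have step := two_mul_two_zpow_sub_one (-j)
  have half := two_zpow_neg_mul_two_pow_pred hj
  have pos : (0 : ℝ) < 2 ^ (-(j : ℤ)) := by positivity
  have hk' : (2 : ℝ) ^ (j - 1) ≤ k := mod_cast hk
  have left_node_ge : 1 / 2 ≤ (2 : ℝ) ^ (-(j : ℤ)) * k :=
    half ▸ mul_le_mul_of_nonneg_left hk' pos.le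
  rw [delta2_comp_tent_of_half_le f left_node_ge (by linarith), step,
    zpow_add_one₀ two_ne_zero]
  congr 1
  linear_combination 2 * half

end Dyadic

theorem tent_transform_faber_coefficients_general (f : ℝ → ℝ) :
    (f ∘ tent) 0 = f 1 ∧
    -(1 / 2) * ((f ∘ tent) 1 - 2 * (f ∘ tent) (1 / 2) + (f ∘ tent) 0) = f 0 - f 1 ∧
    ∀ j : ℕ, 1 ≤ j → ∀ k : ℤ,
      (k < 2 ^ (j - 1) →
        delta2 (f ∘ tent) (2 ^ (-(j : ℤ) - 1)) (2 ^ (-(j : ℤ)) * k) =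
          delta2 f (2 ^ (-(j : ℤ))) (2 ^ (-(j : ℤ) + 1) * (2 ^ (j - 1) - k - 1))) ∧
      (2 ^ (j - 1) ≤ k →
        delta2 (f ∘ tent) (2 ^ (-(j : ℤ) - 1)) (2 ^ (-(j : ℤ)) * k) =
          delta2 f (2 ^ (-(j : ℤ))) (2 ^ (-(j : ℤ) + 1) * (k - 2 ^ (j - 1)))) := by
  have tent_zero : tent 0 = 1 := by norm_num [tent]
  have tent_half : tent (1 / 2) = 0 := by norm_num [tent]
  have tent_one : tent 1 = 1 := by norm_num [tent]
  refine ⟨congrArg f tent_zero, ?_, fun j hj k =>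
    ⟨delta2_comp_tent_dyadic_of_lt f hj, delta2_comp_tent_dyadic_of_le f hj⟩⟩
  simp only [Function.comp_apply, tent_zero, tent_half, tent_one]
  ring

/-- Faber coefficients under the tent transform: with
`g(x) = f(|2x−1|)` one has (i) `g(0) = f(1)`, (ii) `−(1/2)(g(1) − 2g(1/2) + g(0)) = f(0) − f(1)`,
and (iii) for `j ≥ 1` and `0 ≤ k < 2^j` the second differences of `g` at level `j` are second
differences of `f` at level `j−1` as described. -/
theorem tent_transform_faber_coefficients (f : ℝ → ℝ) (hf : ContinuousOn f (Set.Icc 0 1)) :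
    ((fun x : ℝ => f (|2*x - 1|)) 0 = f 1) ∧
    (-(1/2) * ((fun x : ℝ => f (|2*x - 1|)) 1 - 2 * (fun x : ℝ => f (|2*x - 1|)) (1/2)
        + (fun x : ℝ => f (|2*x - 1|)) 0) = f 0 - f 1) ∧
    (∀ j : ℕ, 1 ≤ j → ∀ k : ℕ, k < 2^j →
      ((k < 2^(j-1) →
        delta2 (fun x => f (|2*x - 1|)) ((2:ℝ)^(-(j:ℤ)-1)) ((2:ℝ)^(-(j:ℤ)) * (k:ℝ))
          = delta2 f ((2:ℝ)^(-(j:ℤ)))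
              ((2:ℝ)^(-(j:ℤ)+1) * (((2^(j-1) : ℕ) : ℝ) - (k:ℝ) - 1))) ∧
       (2^(j-1) ≤ k →
        delta2 (fun x => f (|2*x - 1|)) ((2:ℝ)^(-(j:ℤ)-1)) ((2:ℝ)^(-(j:ℤ)) * (k:ℝ))
          = delta2 f ((2:ℝ)^(-(j:ℤ)))
              ((2:ℝ)^(-(j:ℤ)+1) * ((k:ℝ) - ((2^(j-1) : ℕ) : ℝ)))))) := by
  obtain ⟨value_zero, coeff_zero, coeff_succ⟩ := tent_transform_faber_coefficients_general f
  exact ⟨value_zero, coeff_zero, fun j hj k _ => mod_cast coeff_succ j hj k⟩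
end

section
/- There exists an absolute constant C > 0 with the following property. Let f : ℝ → ℝ be continuous, set c_{m,k} = ∫_0^1 f(|2x − 1| − m) e^{−2πi k x} dx for m, k ∈ ℤ, and suppose A := sup_{k∈ℤ} (1 + |k|)² ( Σ_{m∈ℤ} |c_{m,k}|² )^{1/2} < ∞. Then f is square-integrable on ℝ and ∫_ℝ f(t)² dt ≤ C·A². -/
open scoped BigOperators ENNReal

/-!
The tent map preserves Lebesgue measure on the unit interval, so by Parseval's identity the
coefficients `c_{m,k}` of a fixed `m` have sum of squares `∫_{-m}^{1-m} |f|²`. Summing over `m`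
gives `∫_ℝ |f|² = ∑ₖ ∑ₘ |c_{m,k}|²`, and the `k`-th inner sum is at most `A² / w(k)²` for the weight
`w`, here `w(k) = (1 + |k|)²`. All sums are taken in `[0, ∞]`, where they may be interchanged freely
and their finiteness is only obtained at the end.
-/

open MeasureTheory Set

/-- The univariate tent transform, extended to a map of the real line; it folds `[0, 1]`
onto itself. -/
def tentMap (x : ℝ) : ℝ := |2 * x - 1|

/-- The coefficient `c_{m,k}`: the `k`-th Fourier coefficient over `[0, 1]` of `f (tentMap x - m)`,
for complex-valued `f`. -/
noncomputable def tentFourierCoeff (f : ℝ → ℂ) (m k : ℤ) : ℂ :=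
  ∫ x in (0 : ℝ)..1, f (tentMap x - m) *
    Complex.exp (-2 * (Real.pi : ℂ) * Complex.I * (k : ℂ) * (x : ℂ))

lemma measurable_tentMap : Measurable tentMap := by
  unfold tentMap
  fun_prop

lemma tentMap_preimage_Iic (a : ℝ) :
    tentMap ⁻¹' Iic a = Icc ((1 - a) / 2) ((1 + a) / 2) := by
  ext x
  simp only [tentMap, mem_preimage, mem_Iic, mem_Icc, abs_le]
  constructor <;> rintro ⟨h₁, h₂⟩ <;> constructor <;> linarith

theorem measurePreserving_tentMap :
    MeasurePreserving tentMap (volume.restrict (Icc 0 1)) (volume.restrict (Icc 0 1)) := by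
  refine ⟨measurable_tentMap, Measure.ext_of_Iic _ _ fun a => ?_⟩
  have length_eq : (1 + a) / 2 ⊓ 1 - (1 - a) / 2 ⊔ 0 = a ⊓ 1 := by
    rcases le_total a 1 with ha | ha
    · rw [inf_of_le_left (by linarith), sup_of_le_left (by linarith), inf_of_le_left ha]
      ring
    · rw [inf_of_le_right (by linarith), sup_of_le_right (by linarith), inf_of_le_right ha,
        sub_zero]
  have Iic_inter_Icc : Iic a ∩ Icc 0 1 = Icc 0 (a ⊓ 1) := by
    ext x
    simp only [mem_inter_iff, mem_Iic, mem_Icc, le_inf_iff]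
    tauto
  rw [Measure.map_apply measurable_tentMap measurableSet_Iic,
    Measure.restrict_apply (measurable_tentMap measurableSet_Iic),
    Measure.restrict_apply measurableSet_Iic, tentMap_preimage_Iic, Icc_inter_Icc, Iic_inter_Icc,
    Real.volume_Icc, Real.volume_Icc, length_eq, sub_zero]

theorem measurePreserving_tentMap_sub (a : ℝ) :
    MeasurePreserving (fun x => tentMap x - a)
      (volume.restrict (Ioc 0 1)) (volume.restrict (Ioc (-a) (-a + 1))) := by
  have translation := (measurePreserving_sub_right volume a).restrict_preimage
    (measurableSet_Icc (a := -a) (b := -a + 1))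
  rw [preimage_sub_const_Icc, neg_add_cancel, neg_add_cancel_comm] at translation
  rw [restrict_Ioc_eq_restrict_Icc, restrict_Ioc_eq_restrict_Icc]
  exact translation.comp measurePreserving_tentMap

lemma tentFourierCoeff_eq_fourierCoeffOn (f : ℝ → ℂ) (m k : ℤ) :
    tentFourierCoeff f m k = fourierCoeffOn zero_lt_one (f ∘ (tentMap · - m)) k := by
  rw [fourierCoeffOn_eq_integral, sub_zero, div_one, one_smul, tentFourierCoeff]
  refine intervalIntegral.integral_congr fun x _ => ?_
  simp only [fourier_coe_apply, smul_eq_mul, Function.comp_apply]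
  rw [mul_comm]
  congr 2
  push_cast
  ring

theorem tsum_ofReal_norm_sq_fourierCoeffOn {a b : ℝ} (hab : a < b) {f : ℝ → ℂ}
    (hf : MemLp f 2 (volume.restrict (Ioc a b))) :
    ∑' k : ℤ, ENNReal.ofReal (‖fourierCoeffOn hab f k‖ ^ 2) =
      ENNReal.ofReal (b - a)⁻¹ * ∫⁻ x in Ioc a b, ENNReal.ofReal (‖f x‖ ^ 2) := by
  have parseval := hasSum_sq_fourierCoeffOn hab hf
  rw [← ENNReal.ofReal_tsum_of_nonneg (fun _ => by positivity) parseval.summable,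
    parseval.tsum_eq, smul_eq_mul, ENNReal.ofReal_mul (inv_nonneg.2 (sub_nonneg.2 hab.le)),
    intervalIntegral.integral_of_le hab.le,
    ofReal_integral_eq_lintegral_ofReal (hf.integrable_norm_pow two_ne_zero)
      (.of_forall fun _ => by positivity)]

theorem tsum_ofReal_norm_sq_tentFourierCoeff {f : ℝ → ℂ} {m : ℤ}
    (hf : MemLp f 2 (volume.restrict (Ioc (-m : ℝ) (-m + 1)))) :
    ∑' k : ℤ, ENNReal.ofReal (‖tentFourierCoeff f m k‖ ^ 2) =
      ∫⁻ t in Ioc (-m : ℝ) (-m + 1), ENNReal.ofReal (‖f t‖ ^ 2) := by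
  have tent := measurePreserving_tentMap_sub m
  simp only [tentFourierCoeff_eq_fourierCoeffOn]
  rw [tsum_ofReal_norm_sq_fourierCoeffOn zero_lt_one (hf.comp_measurePreserving tent), sub_zero,
    inv_one, ENNReal.ofReal_one, one_mul]
  have hmeas : AEMeasurable (fun t => ENNReal.ofReal (‖f t‖ ^ 2))
      (volume.restrict (Ioc (-m : ℝ) (-m + 1))) := by
    have := hf.aestronglyMeasurable.norm.aemeasurable
    fun_prop
  rw [← tent.map_eq] at hmeas ⊢
  exact (lintegral_map' hmeas tent.aemeasurable).symm

lemma lintegral_eq_tsum_setLIntegral_Ioc_intCast (g : ℝ → ℝ≥0∞) :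
    ∫⁻ t, g t = ∑' n : ℤ, ∫⁻ t in Ioc (n : ℝ) (n + 1), g t := by
  rw [← setLIntegral_univ, ← iUnion_Ioc_intCast ℝ,
    lintegral_iUnion (fun _ => measurableSet_Ioc) (pairwise_disjoint_Ioc_intCast ℝ)]

theorem lintegral_norm_sq_eq_tsum_tentFourierCoeff {f : ℝ → ℂ}
    (hf : ∀ n : ℤ, MemLp f 2 (volume.restrict (Ioc (n : ℝ) (n + 1)))) :
    ∫⁻ t, ENNReal.ofReal (‖f t‖ ^ 2) =
      ∑' k : ℤ, ∑' m : ℤ, ENNReal.ofReal (‖tentFourierCoeff f m k‖ ^ 2) := by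
  rw [ENNReal.tsum_comm, lintegral_eq_tsum_setLIntegral_Ioc_intCast, ← (Equiv.neg ℤ).tsum_eq]
  refine tsum_congr fun m => ?_
  have hfm := hf (-m)
  simp only [Equiv.neg_apply, Int.cast_neg] at hfm ⊢
  exact (tsum_ofReal_norm_sq_tentFourierCoeff hfm).symm

lemma le_ofReal_inv_sq_mul_sq_of_mul_sqrt_le {w A : ℝ} (hw : 0 < w) {S : ℝ≥0∞}
    (h : ENNReal.ofReal w * S ^ (1 / 2 : ℝ) ≤ ENNReal.ofReal A) :
    S ≤ ENNReal.ofReal ((w ^ 2)⁻¹ * A ^ 2) := by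
  have sqrt_le : S ^ (1 / 2 : ℝ) ≤ ENNReal.ofReal (|A| / w) := by
    rw [ENNReal.ofReal_div_of_pos hw, ENNReal.le_div_iff_mul_le (by simp [hw]) (by simp), mul_comm]
    exact h.trans (ENNReal.ofReal_le_ofReal (le_abs_self A))
  calc S = (S ^ (1 / 2 : ℝ)) ^ 2 := by
        rw [← ENNReal.rpow_natCast, ← ENNReal.rpow_mul]
        norm_num
    _ ≤ ENNReal.ofReal (|A| / w) ^ 2 := by gcongr
    _ = ENNReal.ofReal ((w ^ 2)⁻¹ * A ^ 2) := by
        rw [← ENNReal.ofReal_pow (by positivity), div_pow, sq_abs, inv_mul_eq_div]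

lemma memLp_two_and_integral_norm_sq_le {α E : Type*} [MeasurableSpace α] {μ : Measure α}
    [NormedAddCommGroup E] {f : α → E} (hf : AEStronglyMeasurable f μ) {B : ℝ} (hB : 0 ≤ B)
    (h : ∫⁻ x, ENNReal.ofReal (‖f x‖ ^ 2) ∂μ ≤ ENNReal.ofReal B) :
    MemLp f 2 μ ∧ ∫ x, ‖f x‖ ^ 2 ∂μ ≤ B := by
  have nonneg : 0 ≤ᵐ[μ] fun x => ‖f x‖ ^ 2 := .of_forall fun _ => by positivity
  have measurable : AEStronglyMeasurable (fun x => ‖f x‖ ^ 2) μ := hf.norm.pow 2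
  constructor
  · rw [memLp_two_iff_integrable_sq_norm hf]
    exact ⟨measurable, (hasFiniteIntegral_iff_ofReal nonneg).2 (h.trans_lt ENNReal.ofReal_lt_top)⟩
  · rw [integral_eq_lintegral_of_nonneg_ae nonneg measurable]
    exact ENNReal.toReal_le_of_le_ofReal hB h

lemma aestronglyMeasurable_of_forall_Ioc_intCast {E : Type*} [TopologicalSpace E]
    [TopologicalSpace.PseudoMetrizableSpace E] {f : ℝ → E}
    (hf : ∀ n : ℤ, AEStronglyMeasurable f (volume.restrict (Ioc (n : ℝ) (n + 1)))) :
    AEStronglyMeasurable f := by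
  rw [← Measure.restrict_univ (μ := volume), ← iUnion_Ioc_intCast ℝ]
  exact .iUnion hf

lemma summable_inv_sq_one_add_abs_intCast_pow {p : ℕ} (hp : p ≠ 0) :
    Summable fun k : ℤ => (((1 + |(k : ℝ)|) ^ p) ^ 2)⁻¹ := by
  have summable_nat : Summable fun n : ℕ => (((1 + (n : ℝ)) ^ p) ^ 2)⁻¹ := by
    have one_lt : 1 < p * 2 := by lia
    simpa [add_comm, ← pow_mul] using
      (summable_nat_add_iff 1).2 (Real.summable_nat_pow_inv.2 one_lt)
  apply Summable.of_nat_of_neg <;> simpa using summable_nat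

lemma memLp_restrict_of_continuousOn {X E : Type*} [TopologicalSpace X]
    [TopologicalSpace.PseudoMetrizableSpace X] [MeasurableSpace X] [OpensMeasurableSpace X]
    {μ : Measure X} [IsFiniteMeasureOnCompacts μ] [NormedAddCommGroup E] {f : X → E} {K : Set X}
    (hK : IsCompact K) (hK_meas : MeasurableSet K) (hf : ContinuousOn f K) (p : ℝ≥0∞) :
    MemLp f p (μ.restrict K) := by
  have : IsFiniteMeasure (μ.restrict K) := isFiniteMeasure_restrict.2 hK.measure_ne_top
  obtain ⟨C, hC⟩ := hK.exists_bound_of_continuousOn hf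
  exact .of_bound (hf.aestronglyMeasurable_of_isCompact hK hK_meas) C
    (ae_restrict_of_forall_mem hK_meas hC)

theorem E2_embeds_into_L2_general {w : ℤ → ℝ} (hw : ∀ k, 0 < w k)
    (hw_summable : Summable fun k => (w k ^ 2)⁻¹) {f : ℝ → ℂ}
    (hf : ∀ K, IsCompact K → MemLp f 2 (volume.restrict K)) {A : ℝ}
    (hA : ∀ k : ℤ, ENNReal.ofReal (w k) *
      (∑' m : ℤ, ENNReal.ofReal (‖tentFourierCoeff f m k‖ ^ 2)) ^ (1 / 2 : ℝ) ≤ ENNReal.ofReal A) :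
    MemLp f 2 ∧ ∫ t, ‖f t‖ ^ 2 ≤ (∑' k, (w k ^ 2)⁻¹) * A ^ 2 := by
  have hf_Ioc (n : ℤ) : MemLp f 2 (volume.restrict (Ioc (n : ℝ) (n + 1))) :=
    (hf _ isCompact_Icc).mono_measure (Measure.restrict_mono Ioc_subset_Icc_self le_rfl)
  refine memLp_two_and_integral_norm_sq_le
    (aestronglyMeasurable_of_forall_Ioc_intCast fun n => (hf_Ioc n).aestronglyMeasurable)
    (mul_nonneg (tsum_nonneg fun _ => by positivity) (sq_nonneg A)) ?_
  calc ∫⁻ t, ENNReal.ofReal (‖f t‖ ^ 2)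
      = ∑' k : ℤ, ∑' m : ℤ, ENNReal.ofReal (‖tentFourierCoeff f m k‖ ^ 2) :=
        lintegral_norm_sq_eq_tsum_tentFourierCoeff hf_Ioc
    _ ≤ ∑' k, ENNReal.ofReal ((w k ^ 2)⁻¹ * A ^ 2) :=
        ENNReal.tsum_le_tsum fun k =>
          le_ofReal_inv_sq_mul_sq_of_mul_sqrt_le (hw k) (hA k)
    _ = ENNReal.ofReal ((∑' k, (w k ^ 2)⁻¹) * A ^ 2) := by
        rw [← tsum_mul_right, ENNReal.ofReal_tsum_of_nonneg (fun _ => by positivity)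
          (hw_summable.mul_right _)]

/-- `E²(ℝ)` embeds into `L²(ℝ)`: there is an absolute constant `C > 0`
such that if `f : ℝ → ℝ` is continuous and
`A = sup_{k∈ℤ} (1+|k|)² (Σ_{m∈ℤ} |c_{m,k}|²)^{1/2} < ∞`, where
`c_{m,k} = ∫₀¹ f(|2x−1|−m)e^{−2πikx} dx`, then `f` is square-integrable on `ℝ` and
`∫_ℝ f² ≤ C·A²`. -/
theorem E2_embeds_into_L2 :
    ∃ C : ℝ, 0 < C ∧ ∀ f : ℝ → ℝ, Continuous f → ∀ A : ℝ,
      (∀ k : ℤ,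
        ENNReal.ofReal ((1 + |(k:ℝ)|)^2) *
            (∑' m : ℤ, ENNReal.ofReal
              (‖∫ x in (0:ℝ)..1, (f (|2*x - 1| - (m:ℝ)) : ℂ) *
                  Complex.exp (-2 * (Real.pi : ℂ) * Complex.I * (k : ℂ) * (x : ℂ))‖^2))
                ^ (1/2 : ℝ)
          ≤ ENNReal.ofReal A) →
      MeasureTheory.Integrable (fun t => f t ^ 2) ∧ (∫ t : ℝ, f t ^ 2) ≤ C * A^2 := by
  have summable_weight := summable_inv_sq_one_add_abs_intCast_pow two_ne_zero
  refine ⟨_, summable_weight.tsum_pos (fun _ => by positivity) 0 (by norm_num), fun f hf A hA => ?_⟩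
  have general := E2_embeds_into_L2_general (f := fun t => (f t : ℂ)) (fun _ => by positivity)
    summable_weight
    (fun _ hK => memLp_restrict_of_continuousOn hK hK.measurableSet (by fun_prop) 2) hA
  simpa using general.imp_left (·.integrable_norm_pow two_ne_zero)
end
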